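/- Let G be a group with finite generating set and word metric, admitting a homological connecting vector (k₀,…,k_m) of length m, and set k := max(k₀,…,k_m). Let (φ_q)_{q=0,…,m} be a chain endomorphism of ℤG-complexes on (C_q^k(G))_{q=0,…,m} extending the identity on ℤ. Define U(φ) to be the set of characters χ : G → ℝ such that v_χ(φ_q(x)) − v_χ(x) > 0 for every simplex x = (1,g₁,…,g_q) ∈ Δ^q_k(G) and every q = 0,…,m. Then U(φ) is an open subset of Hom(G,ℝ) in the topology of pointwise convergence, and U(φ) ⊆ Σ^m(G;ℤ). -/

import Mathlib

open Finsupp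

variable {G : Type*} [Group G]

/-- Word length with respect to a generating set `X`. -/
noncomputable def wordLength (X : Finset G) (g : G) : ℕ :=
  sInf {n : ℕ | ∃ w : List G, w.length = n ∧ (∀ x ∈ w, x ∈ X ∨ x⁻¹ ∈ X) ∧ w.prod = g}

/-- The left-invariant word metric `d(g,h) = l(g⁻¹h)`. -/
noncomputable def wordDist (X : Finset G) (g h : G) : ℕ :=
  wordLength X (g⁻¹ * h)

/-- `c` is a chain in `C_q^k(S)`: its support consists of `(q+1)`-tuples of elements of `S`
that are pairwise at distance at most `k`. -/
def VRChain (X : Finset G) (S : Set G) (q k : ℕ) (c : (Fin (q + 1) → G) →₀ ℤ) : Prop :=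
  ∀ σ ∈ c.support, (∀ i, σ i ∈ S) ∧ ∀ i j, wordDist X (σ i) (σ j) ≤ k

/-- The simplicial boundary map `∂_{q+1} : ℤ[G^{q+2}] → ℤ[G^{q+1}]`. -/
noncomputable def bnd (q : ℕ) :
    ((Fin (q + 2) → G) →₀ ℤ) →ₗ[ℤ] ((Fin (q + 1) → G) →₀ ℤ) :=
  Finsupp.lift _ ℤ _
    (fun σ => ∑ i : Fin (q + 2), ((-1 : ℤ) ^ (i : ℕ)) • Finsupp.single (σ ∘ i.succAbove) (1 : ℤ))

/-- The augmentation `ε : ℤ[G] → ℤ` sending every vertex to `1`. -/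
noncomputable def aug : ((Fin 1 → G) →₀ ℤ) →ₗ[ℤ] ℤ :=
  Finsupp.lift ℤ ℤ (Fin 1 → G) (fun _ => (1 : ℤ))

/-- Reduced `q`-cycles at scale `k` on `S` bound at scale `l` on `S`. -/
def BoundsAt (X : Finset G) (S : Set G) : ℕ → ℕ → ℕ → Prop
  | 0, k, l => ∀ z : (Fin 1 → G) →₀ ℤ, VRChain X S 0 k z → aug z = 0 →
      ∃ c : (Fin 2 → G) →₀ ℤ, VRChain X S 1 l c ∧ bnd 0 c = z
  | (q + 1), k, l => ∀ z : (Fin (q + 2) → G) →₀ ℤ, VRChain X S (q + 1) k z → bnd q z = 0 →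
      ∃ c : (Fin (q + 3) → G) →₀ ℤ, VRChain X S (q + 2) l c ∧ bnd (q + 1) c = z

/-- `S ⊆ G` is of type `FP_m`. -/
def TypeFP (X : Finset G) (S : Set G) (m : ℕ) : Prop :=
  ∀ q < m, ∀ k : ℕ, ∃ l ≥ k, BoundsAt X S q k l

/-- A character on `G` is a homomorphism to the additive reals. -/
def IsCharacter (χ : G → ℝ) : Prop :=
  ∀ g h : G, χ (g * h) = χ g + χ h

/-- Simultaneous left translation on chains, making `ℤ[G^{q+1}]` a `ℤG`-module. -/
noncomputable def lTranslate (g : G) (q : ℕ) :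
    ((Fin (q + 1) → G) →₀ ℤ) →ₗ[ℤ] ((Fin (q + 1) → G) →₀ ℤ) :=
  Finsupp.lmapDomain ℤ ℤ (fun σ i => g * σ i)

/-- A chain endomorphism of `ℤG`-complexes on `(C_q^k(G))_{q=0,…,m}` extending the identity
on `ℤ`: each `φ q` maps scale-`k` chains to scale-`k` chains, is `G`-equivariant,
satisfies `ε ∘ φ₀ = ε` and commutes with the boundary maps. -/
def IsChainEndo (X : Finset G) (k m : ℕ)
    (φ : ∀ q : ℕ, ((Fin (q + 1) → G) →₀ ℤ) →ₗ[ℤ] ((Fin (q + 1) → G) →₀ ℤ)) : Prop :=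
  (∀ q ≤ m, ∀ c, VRChain X Set.univ q k c → VRChain X Set.univ q k (φ q c)) ∧
  (∀ q ≤ m, ∀ (g : G) (c), VRChain X Set.univ q k c →
    φ q (lTranslate g q c) = lTranslate g q (φ q c)) ∧
  (∀ c : (Fin 1 → G) →₀ ℤ, VRChain X Set.univ 0 k c → aug (φ 0 c) = aug c) ∧
  (∀ q : ℕ, q + 1 ≤ m → ∀ c : (Fin (q + 2) → G) →₀ ℤ, VRChain X Set.univ (q + 1) k c →
    bnd q (φ (q + 1) c) = φ q (bnd q c))

/-- The valuation of a simplex: `v(σ) = min_i χ(g_i)` (with values in `EReal`). -/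
noncomputable def vsimp (χ : G → ℝ) {q : ℕ} (σ : Fin (q + 1) → G) : EReal :=
  ⨅ i, (χ (σ i) : EReal)

/-- The valuation of a chain: the minimum of the valuations of the simplices in its support
(`⊤` for the zero chain). -/
noncomputable def vchain (χ : G → ℝ) {q : ℕ} (c : (Fin (q + 1) → G) →₀ ℤ) : EReal :=
  ⨅ σ ∈ c.support, vsimp χ σ

/-- The set of characters for which `φ` raises the valuation on all basis simplices
`(1,g₁,…,g_q) ∈ Δ^q_k`. -/
def UCond {G : Type*} [Group G] (X : Finset G) (k m : ℕ)
    (φ : ∀ q : ℕ, ((Fin (q + 1) → G) →₀ ℤ) →ₗ[ℤ] ((Fin (q + 1) → G) →₀ ℤ))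
    (χ : G → ℝ) : Prop :=
  ∀ q ≤ m, ∀ x : Fin (q + 1) → G, x 0 = 1 →
    VRChain X Set.univ q k (Finsupp.single x 1) →
      0 < vchain χ (φ q (Finsupp.single x 1)) - vchain χ (Finsupp.single x 1)

/-!
Any equivariant chain map `g` between Rips complexes that extends the identity on `ℤ` is homotopic
to the identity through cones over initial vertices. If `g` preserves `G_χ`, so does this homotopy,
and by equivariance its scale is bounded; hence `g z - z` bounds in `G_χ` at a uniform scale for
every cycle `z` in `G_χ`.

Let `φ` raise `v_χ`. The connecting vector yields a chain map `ψ` to scale `k` which lowers `v_χ` by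
a bounded amount only, so that `φ^N ψ` preserves `G_χ` for large `N`. For a cycle `z` in `G_χ`, the
cycle `u = φ^N ψ z` bounds a chain `c` at scale `k` in `G`, and `φ^M c` lies in `G_χ` for large `M`.
Now each term of `z = φ^M u - (φ^M u - u) - (u - z)` bounds in `G_χ`, at a scale that depends on
neither `z` nor `M`.

Openness of `U(φ)` holds because only finitely many strict inequalities between values of `χ` are
imposed.
-/

/-! ### Supported chains -/

section Supported

variable {R α M : Type*} [Semiring R] [AddCommMonoid M] [Module R M]

theorem map_mem_of_mem_supported {s : Set α} {N : Submodule R M} (f : (α →₀ R) →ₗ[R] M)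
    (h : ∀ a ∈ s, f (single a 1) ∈ N) {c : α →₀ R} (hc : c ∈ supported R R s) : f c ∈ N := by
  rw [supported_eq_span_single] at hc
  exact (Submodule.map_span_le f _ N).2 (Set.forall_mem_image.2 h) (Submodule.mem_map_of_mem hc)

theorem map_eq_map_of_mem_supported {s : Set α} (f g : (α →₀ R) →ₗ[R] M)
    (h : ∀ a ∈ s, f (single a 1) = g (single a 1)) {c : α →₀ R} (hc : c ∈ supported R R s) :
    f c = g c := by
  rw [supported_eq_span_single] at hc
  exact LinearMap.eqOn_span (Set.forall_mem_image.2 h) hc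

theorem map_eq_map_of_single (f g : (α →₀ R) →ₗ[R] M)
    (h : ∀ a, f (single a 1) = g (single a 1)) (c : α →₀ R) : f c = g c :=
  LinearMap.congr_fun (lhom_ext' fun a => LinearMap.ext_ring (h a)) c

theorem single_one_mem_supported_iff [Nontrivial R] {s : Set α} {a : α} :
    single a (1 : R) ∈ supported R R s ↔ a ∈ s := by
  simp only [mem_supported, support_single _ one_ne_zero, Finset.coe_singleton,
    Set.singleton_subset_iff]

end Supported

/-! ### The augmented complex of tuples -/

/-- Integral chains on `n`-tuples. Counting vertices instead of dimensions puts the augmentation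
module `ℤ` in degree `n = 0`, so that `aug` and `bnd` become instances of one boundary map. -/
abbrev TupleChain (V : Type*) (n : ℕ) : Type _ := (Fin n → V) →₀ ℤ

section Complex

variable {V : Type*}

/-- The boundary map of the augmented complex of tuples. -/
noncomputable def augBnd (n : ℕ) : TupleChain V (n + 1) →ₗ[ℤ] TupleChain V n :=
  ∑ i : Fin (n + 1), (-1 : ℤ) ^ (i : ℕ) • lmapDomain ℤ ℤ fun σ : Fin (n + 1) → V => σ ∘ i.succAbove

/-- The cone operator with apex `a`, a contracting homotopy of the augmented complex. -/
noncomputable def cone (a : V) (n : ℕ) : TupleChain V n →ₗ[ℤ] TupleChain V (n + 1) :=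
  lmapDomain ℤ ℤ fun σ => Fin.cons a σ

theorem augBnd_single (n : ℕ) (σ : Fin (n + 1) → V) :
    augBnd n (single σ 1) =
      ∑ i : Fin (n + 1), (-1 : ℤ) ^ (i : ℕ) • single (σ ∘ i.succAbove) (1 : ℤ) := by
  simp [augBnd, LinearMap.sum_apply, mapDomain_single]

theorem cone_single (a : V) (n : ℕ) (σ : Fin n → V) :
    cone a n (single σ 1) = single (Fin.cons a σ) 1 :=
  mapDomain_single

theorem bnd_eq_augBnd (q : ℕ) (c : TupleChain V (q + 2)) : bnd q c = augBnd (q + 1) c :=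
  map_eq_map_of_single _ _ (fun σ => by simp [bnd, augBnd_single]) c

theorem augBnd_zero_apply (c : TupleChain V 1) : augBnd 0 c = single Fin.elim0 (aug c) :=
  map_eq_map_of_single (augBnd 0) (lsingle Fin.elim0 ∘ₗ aug)
    (fun σ => by simp [augBnd_single, aug, Subsingleton.elim (σ ∘ Fin.succ) Fin.elim0]) c

theorem augBnd_zero_eq_zero_iff (c : TupleChain V 1) : augBnd 0 c = 0 ↔ aug c = 0 := by
  rw [augBnd_zero_apply, single_eq_zero]

theorem augBnd_cone_zero (a : V) (c : TupleChain V 0) : augBnd 0 (cone a 0 c) = c :=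
  map_eq_map_of_single (augBnd 0 ∘ₗ cone a 0) LinearMap.id
    (fun σ => by simp [cone_single, augBnd_single, Subsingleton.elim _ σ]) c

theorem augBnd_cone_succ (a : V) (n : ℕ) (c : TupleChain V (n + 1)) :
    augBnd (n + 1) (cone a (n + 1) c) = c - cone a n (augBnd n c) := by
  refine map_eq_map_of_single (augBnd (n + 1) ∘ₗ cone a (n + 1))
    (LinearMap.id - cone a n ∘ₗ augBnd n) (fun σ => ?_) c
  have cons_face (i : Fin (n + 1)) :
      (Fin.cons a σ : Fin (n + 2) → V) ∘ i.succ.succAbove = Fin.cons a (σ ∘ i.succAbove) := by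
    funext j
    cases j using Fin.cases <;> simp
  simp only [LinearMap.comp_apply, LinearMap.sub_apply, LinearMap.id_apply, cone_single,
    augBnd_single, map_sum, map_smul]
  rw [Fin.sum_univ_succ, sub_eq_add_neg, ← Finset.sum_neg_distrib]
  congr 1
  · simp
  · exact Finset.sum_congr rfl fun i _ => by
      rw [cons_face, Fin.val_succ, pow_succ, mul_neg_one, neg_smul]

-- A simplex is the cone over the face opposite its initial vertex, so the cone formula reduces the
-- claim to lower degree.
theorem augBnd_augBnd (n : ℕ) (c : TupleChain V (n + 2)) : augBnd n (augBnd (n + 1) c) = 0 := by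
  refine map_eq_map_of_single (augBnd n ∘ₗ augBnd (n + 1)) 0 (fun σ => ?_) c
  rw [LinearMap.comp_apply, LinearMap.zero_apply, ← Fin.cons_self_tail σ, ← cone_single,
    augBnd_cone_succ, map_sub]
  cases n with
  | zero => rw [augBnd_cone_zero, sub_self]
  | succ n => rw [augBnd_cone_succ, augBnd_augBnd n, map_zero, sub_zero, sub_self]

end Complex

/-- Left translation of chains, which includes the augmentation degree missing from
`lTranslate`. -/
noncomputable def leftTr (g : G) (n : ℕ) : TupleChain G n →ₗ[ℤ] TupleChain G n :=
  lmapDomain ℤ ℤ (g • ·)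

theorem leftTr_single (g : G) (n : ℕ) (σ : Fin n → G) :
    leftTr g n (single σ 1) = single (g • σ) 1 :=
  mapDomain_single

theorem leftTr_leftTr (g h : G) (n : ℕ) (c : TupleChain G n) :
    leftTr g n (leftTr h n c) = leftTr (g * h) n c :=
  map_eq_map_of_single (leftTr g n ∘ₗ leftTr h n) (leftTr (g * h) n)
    (fun σ => by simp only [LinearMap.comp_apply, leftTr_single, mul_smul]) c

theorem augBnd_leftTr (g : G) (n : ℕ) (c : TupleChain G (n + 1)) :
    augBnd n (leftTr g (n + 1) c) = leftTr g n (augBnd n c) :=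
  map_eq_map_of_single (augBnd n ∘ₗ leftTr g (n + 1)) (leftTr g n ∘ₗ augBnd n)
    (fun σ => by
      simp only [LinearMap.comp_apply, leftTr_single, augBnd_single, map_sum, map_smul]
      rfl) c

theorem cone_leftTr (g a : G) (n : ℕ) (c : TupleChain G n) :
    cone (g * a) n (leftTr g n c) = leftTr g (n + 1) (cone a n c) :=
  map_eq_map_of_single (cone (g * a) n ∘ₗ leftTr g n) (leftTr g (n + 1) ∘ₗ cone a n)
    (fun σ => by
      simp only [LinearMap.comp_apply, leftTr_single, cone_single]
      congr 1
      funext i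
      cases i using Fin.cases <;> simp) c

/-! ### The word metric -/

theorem wordDist_mul_left (X : Finset G) (g a b : G) :
    wordDist X (g * a) (g * b) = wordDist X a b := by
  simp only [wordDist, mul_inv_rev, mul_assoc, inv_mul_cancel_left]

theorem wordDist_self (X : Finset G) (g : G) : wordDist X g g = 0 := by
  rw [wordDist, inv_mul_cancel]
  exact Nat.eq_zero_of_le_zero (Nat.sInf_le ⟨[], rfl, by simp, rfl⟩)

theorem exists_word_length_eq {X : Finset G} (hX : Subgroup.closure (X : Set G) = ⊤) (g : G) :
    ∃ w : List G, w.length = wordLength X g ∧ (∀ x ∈ w, x ∈ X ∨ x⁻¹ ∈ X) ∧ w.prod = g := by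
  have hg : g ∈ (Subgroup.closure (X : Set G)).toSubmonoid := hX ▸ Subgroup.mem_top g
  rw [Subgroup.closure_toSubmonoid] at hg
  obtain ⟨w, hw, hwg⟩ := Submonoid.exists_list_of_mem_closure hg
  exact Nat.sInf_mem (s := {n : ℕ | ∃ w : List G, w.length = n ∧
    (∀ x ∈ w, x ∈ X ∨ x⁻¹ ∈ X) ∧ w.prod = g}) ⟨_, w, rfl, hw, hwg⟩

theorem finite_setOf_wordLength_le {X : Finset G} (hX : Subgroup.closure (X : Set G) = ⊤)
    (k : ℕ) : {g : G | wordLength X g ≤ k}.Finite := by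
  have hY : {x : G | x ∈ X ∨ x⁻¹ ∈ X}.Finite :=
    X.finite_toSet.union (X.finite_toSet.preimage inv_injective.injOn)
  have : Finite {x : G | x ∈ X ∨ x⁻¹ ∈ X} := hY
  refine ((List.finite_length_le {x : G | x ∈ X ∨ x⁻¹ ∈ X} k).image
    fun w => (w.map Subtype.val).prod).subset fun g hg => ?_
  obtain ⟨w, hwl, hw, hwg⟩ := exists_word_length_eq hX g
  lift w to List {x : G | x ∈ X ∨ x⁻¹ ∈ X} using hw
  rw [List.length_map] at hwl
  exact ⟨w, hwl.trans_le hg, hwg⟩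

/-! ### Chains on a vertex set and at a scale -/

section Chains

variable {V : Type*}

/-- The chains all of whose vertices lie in `S`. -/
def chainsOn (S : Set V) (n : ℕ) : Submodule ℤ (TupleChain V n) :=
  supported ℤ ℤ {σ | ∀ i, σ i ∈ S}

theorem chainsOn_mono {S T : Set V} (h : S ⊆ T) (n : ℕ) : chainsOn S n ≤ chainsOn T n :=
  supported_mono fun _ hσ i => h (hσ i)

theorem mem_chainsOn_univ {n : ℕ} (c : TupleChain V n) : c ∈ chainsOn Set.univ n :=
  fun _ _ _ => Set.mem_univ _

theorem mem_chainsOn_zero (S : Set V) (c : TupleChain V 0) : c ∈ chainsOn S 0 :=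
  fun _ _ i => i.elim0

theorem augBnd_mem_chainsOn {S : Set V} {n : ℕ} {c : TupleChain V (n + 1)}
    (hc : c ∈ chainsOn S (n + 1)) : augBnd n c ∈ chainsOn S n := by
  refine map_mem_of_mem_supported _ (fun σ hσ => ?_) hc
  rw [augBnd_single]
  exact Submodule.sum_mem _ fun i _ =>
    Submodule.smul_mem _ _ (single_mem_supported ℤ _ fun j => hσ (i.succAbove j))

theorem cone_mem_chainsOn {S : Set V} {a : V} (ha : a ∈ S) {n : ℕ} {c : TupleChain V n}
    (hc : c ∈ chainsOn S n) : cone a n c ∈ chainsOn S (n + 1) := by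
  refine map_mem_of_mem_supported _ (fun σ hσ => ?_) hc
  rw [cone_single]
  exact single_mem_supported ℤ _ (Fin.cases ha hσ)

theorem eventually_mem_chainsOn_superlevel (χ : V → ℝ) {n : ℕ} (c : TupleChain V n) :
    ∀ᶠ r : ℝ in Filter.atBot, c ∈ chainsOn {g | r ≤ χ g} n := by
  have : ∀ᶠ r : ℝ in Filter.atBot, ∀ σ ∈ c.support, ∀ i, r ≤ χ (σ i) := by
    simp only [Filter.eventually_all_finset, Filter.eventually_all]
    exact fun _ _ _ => Filter.eventually_le_atBot _
  exact this

end Chains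

theorem leftTr_mem_chainsOn {S T : Set G} {g : G} (h : ∀ a ∈ S, g * a ∈ T) {n : ℕ}
    {c : TupleChain G n} (hc : c ∈ chainsOn S n) : leftTr g n c ∈ chainsOn T n := by
  refine map_mem_of_mem_supported _ (fun σ hσ => ?_) hc
  rw [leftTr_single]
  exact single_mem_supported ℤ _ fun i => h _ (hσ i)

/-- The `n`-tuples of elements of `G` that are pairwise at distance at most `k`. -/
def tuplesAt (X : Finset G) (k n : ℕ) : Set (Fin n → G) :=
  {σ | ∀ i j, wordDist X (σ i) (σ j) ≤ k}

/-- The chains of the Rips complex of `G` at scale `k`. -/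
def chainsAt (X : Finset G) (k n : ℕ) : Submodule ℤ (TupleChain G n) :=
  supported ℤ ℤ (tuplesAt X k n)

/-- The module of chains `C_{n-1}^k(S)`. -/
noncomputable def ripsChains (X : Finset G) (S : Set G) (k n : ℕ) : Submodule ℤ (TupleChain G n) :=
  chainsOn S n ⊓ chainsAt X k n

/-- The boundaries of chains in `C_n^l(S)`. -/
noncomputable def boundaries (X : Finset G) (S : Set G) (l n : ℕ) : Submodule ℤ (TupleChain G n) :=
  (ripsChains X S l (n + 1)).map (augBnd n)

section Scale

variable {X : Finset G} {S : Set G} {k l n : ℕ}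

theorem smul_mem_tuplesAt (g : G) {σ : Fin n → G} (hσ : σ ∈ tuplesAt X k n) :
    g • σ ∈ tuplesAt X k n := fun i j => by
  simpa only [Pi.smul_apply, smul_eq_mul, wordDist_mul_left] using hσ i j

theorem chainsAt_mono (h : k ≤ l) (n : ℕ) : chainsAt X k n ≤ chainsAt X l n :=
  supported_mono fun _ hσ i j => (hσ i j).trans h

theorem boundaries_mono (h : k ≤ l) (n : ℕ) : boundaries X S k n ≤ boundaries X S l n :=
  Submodule.map_mono (inf_le_inf_left _ (chainsAt_mono h _))

theorem mem_chainsAt_zero (c : TupleChain G 0) : c ∈ chainsAt X k 0 :=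
  fun _ _ i => i.elim0

theorem augBnd_mem_chainsAt {c : TupleChain G (n + 1)} (hc : c ∈ chainsAt X k (n + 1)) :
    augBnd n c ∈ chainsAt X k n := by
  refine map_mem_of_mem_supported _ (fun σ hσ => ?_) hc
  rw [augBnd_single]
  exact Submodule.sum_mem _ fun i _ =>
    Submodule.smul_mem _ _ (single_mem_supported ℤ _ fun _ _ => hσ _ _)

theorem leftTr_mem_chainsAt (g : G) {c : TupleChain G n} (hc : c ∈ chainsAt X k n) :
    leftTr g n c ∈ chainsAt X k n := by
  refine map_mem_of_mem_supported _ (fun σ hσ => ?_) hc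
  rw [leftTr_single]
  exact single_mem_supported ℤ _ (smul_mem_tuplesAt g hσ)

theorem eventually_mem_chainsAt (X : Finset G) (c : TupleChain G n) :
    ∀ᶠ l in Filter.atTop, c ∈ chainsAt X l n := by
  have : ∀ᶠ l in Filter.atTop, ∀ σ ∈ c.support, ∀ i j, wordDist X (σ i) (σ j) ≤ l := by
    simp only [Filter.eventually_all_finset, Filter.eventually_all]
    exact fun _ _ _ _ => Filter.eventually_ge_atTop _
  exact this

theorem vrChain_iff_mem_ripsChains {q : ℕ} {c : TupleChain G (q + 1)} :
    VRChain X S q k c ↔ c ∈ ripsChains X S k (q + 1) :=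
  ⟨fun h => ⟨fun _ hσ => (h _ hσ).1, fun _ hσ => (h _ hσ).2⟩,
    fun h _ hσ => ⟨h.1 hσ, h.2 hσ⟩⟩

theorem vrChain_univ_iff_mem_chainsAt {q : ℕ} {c : TupleChain G (q + 1)} :
    VRChain X Set.univ q k c ↔ c ∈ chainsAt X k (q + 1) :=
  vrChain_iff_mem_ripsChains.trans (and_iff_right (mem_chainsOn_univ c))

theorem boundsAt_iff_mem_boundaries {q : ℕ} :
    BoundsAt X S q k l ↔
      ∀ z ∈ ripsChains X S k (q + 1), augBnd q z = 0 → z ∈ boundaries X S l (q + 1) := by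
  cases q with
  | zero =>
    simp only [BoundsAt, vrChain_iff_mem_ripsChains, bnd_eq_augBnd, ← augBnd_zero_eq_zero_iff]
    rfl
  | succ q =>
    simp only [BoundsAt, vrChain_iff_mem_ripsChains, bnd_eq_augBnd]
    rfl

end Scale

/-! ### Equivariant maps have bounded scale -/

/-- The simplices of the Rips complex at scale `k` with initial vertex `1`: representatives of its
simplices modulo left translation. -/
def baseTuples (X : Finset G) (k n : ℕ) : Set (Fin (n + 1) → G) :=
  {σ | σ 0 = 1 ∧ σ ∈ tuplesAt X k (n + 1)}

/-- `L` commutes with left translations on chains at scale `k`. -/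
def EquivariantAt (X : Finset G) (k : ℕ) {n p : ℕ} (L : TupleChain G n →ₗ[ℤ] TupleChain G p) :
    Prop :=
  ∀ g : G, ∀ c ∈ chainsAt X k n, L (leftTr g n c) = leftTr g p (L c)

section Equivariant

variable {X : Finset G} {k n p : ℕ} {L : TupleChain G (n + 1) →ₗ[ℤ] TupleChain G p}

theorem finite_baseTuples (hX : Subgroup.closure (X : Set G) = ⊤) (k n : ℕ) :
    (baseTuples X k n).Finite := by
  refine (Set.Finite.pi' fun _ => finite_setOf_wordLength_le hX k).subset ?_
  rintro σ ⟨h0, hσ⟩ i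
  simpa [wordDist, h0] using hσ 0 i

theorem inv_smul_mem_baseTuples {σ : Fin (n + 1) → G} (hσ : σ ∈ tuplesAt X k (n + 1)) :
    (σ 0)⁻¹ • σ ∈ baseTuples X k n :=
  ⟨inv_mul_cancel (σ 0), smul_mem_tuplesAt _ hσ⟩

theorem EquivariantAt.map_single (hL : EquivariantAt X k L) {σ : Fin (n + 1) → G}
    (hσ : σ ∈ tuplesAt X k (n + 1)) :
    L (single σ 1) = leftTr (σ 0) p (L (single ((σ 0)⁻¹ • σ) 1)) := by
  rw [← hL _ _ (single_mem_supported ℤ _ (smul_mem_tuplesAt _ hσ)), leftTr_single, smul_inv_smul]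

theorem EquivariantAt.exists_mem_chainsAt (hX : Subgroup.closure (X : Set G) = ⊤)
    (hL : EquivariantAt X k L) : ∃ l, ∀ c ∈ chainsAt X k (n + 1), L c ∈ chainsAt X l p := by
  obtain ⟨l, hl⟩ := ((Filter.eventually_all_finite (finite_baseTuples hX k n)).2 fun σ _ =>
    eventually_mem_chainsAt X (L (single σ 1))).exists
  refine ⟨l, fun c hc => map_mem_of_mem_supported L (fun σ hσ => ?_) hc⟩
  rw [hL.map_single hσ]
  exact leftTr_mem_chainsAt _ (hl _ (inv_smul_mem_baseTuples hσ))

end Equivariant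

/-! ### Chain maps between Rips complexes -/

/-- `f` restricts to a chain map of `ℤG`-complexes from scale `k` to scale `l`, in dimensions at
most `m`, that extends the identity on the augmentation module. -/
structure IsRipsChainMap (X : Finset G) (k l m : ℕ)
    (f : ∀ n, TupleChain G n →ₗ[ℤ] TupleChain G n) : Prop where
  zero_eq_id : f 0 = LinearMap.id
  map_mem : ∀ n ≤ m + 1, ∀ c ∈ chainsAt X k n, f n c ∈ chainsAt X l n
  equivariantAt : ∀ n ≤ m + 1, EquivariantAt X k (f n)
  augBnd_map : ∀ n ≤ m, ∀ c ∈ chainsAt X k (n + 1), augBnd n (f (n + 1) c) = f n (augBnd n c)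

/-- `f` maps chains at scale `k` with vertices in `S` to chains with vertices in `S`, in dimensions
at most `m`. -/
def PreservesVertices (X : Finset G) (S : Set G) (k m : ℕ)
    (f : ∀ n, TupleChain G n →ₗ[ℤ] TupleChain G n) : Prop :=
  ∀ n ≤ m + 1, ∀ c ∈ ripsChains X S k n, f n c ∈ chainsOn S n

section ChainMap

variable {X : Finset G} {S : Set G} {k l l' m n : ℕ}
  {f g : ∀ n, TupleChain G n →ₗ[ℤ] TupleChain G n}

theorem IsRipsChainMap.comp (hg : IsRipsChainMap X l l' m g) (hf : IsRipsChainMap X k l m f) :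
    IsRipsChainMap X k l' m fun n => g n ∘ₗ f n where
  zero_eq_id := by rw [hg.zero_eq_id, hf.zero_eq_id, LinearMap.id_comp]
  map_mem n hn c hc := hg.map_mem n hn _ (hf.map_mem n hn c hc)
  equivariantAt n hn a c hc := by
    rw [LinearMap.comp_apply, hf.equivariantAt n hn a c hc,
      hg.equivariantAt n hn a _ (hf.map_mem n hn c hc), LinearMap.comp_apply]
  augBnd_map n hn c hc := by
    rw [LinearMap.comp_apply, hg.augBnd_map n hn _ (hf.map_mem _ (by lia) c hc),
      hf.augBnd_map n hn c hc, LinearMap.comp_apply]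

theorem IsRipsChainMap.pow (hf : IsRipsChainMap X k k m f) (N : ℕ) :
    IsRipsChainMap X k k m fun n => f n ^ N := by
  induction N with
  | zero => exact ⟨rfl, fun _ _ _ hc => hc, fun _ _ _ _ _ => rfl, fun _ _ _ _ => rfl⟩
  | succ N ih =>
    simp only [pow_succ', Module.End.mul_eq_comp]
    exact hf.comp ih

theorem PreservesVertices.pow_apply_mem (hS : PreservesVertices X S k m f)
    (hf : IsRipsChainMap X k k m f) (hn : n ≤ m + 1) {c : TupleChain G n}
    (hc : c ∈ ripsChains X S k n) (N : ℕ) : (f n ^ N) c ∈ ripsChains X S k n := by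
  induction N with
  | zero => exact hc
  | succ N ih =>
    rw [pow_succ', Module.End.mul_apply]
    exact ⟨hS n hn _ ih, hf.map_mem n hn _ ih.2⟩

end ChainMap

/-! ### Cone homotopies -/

/-- The homotopy from the identity to `f` obtained by coning over the initial vertex of each
simplex. -/
noncomputable def coneHomotopy {V : Type*} (f : ∀ n, TupleChain V n →ₗ[ℤ] TupleChain V n) :
    ∀ n, TupleChain V n →ₗ[ℤ] TupleChain V (n + 1)
  | 0 => 0
  | n + 1 => Finsupp.lift _ ℤ _ fun σ => cone (σ 0) (n + 1)
      (f (n + 1) (single σ 1) - single σ 1 - coneHomotopy f n (augBnd n (single σ 1)))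

theorem coneHomotopy_succ_single {V : Type*} (f : ∀ n, TupleChain V n →ₗ[ℤ] TupleChain V n)
    (n : ℕ) (σ : Fin (n + 1) → V) :
    coneHomotopy f (n + 1) (single σ 1) = cone (σ 0) (n + 1)
      (f (n + 1) (single σ 1) - single σ 1 - coneHomotopy f n (augBnd n (single σ 1))) := by
  simp [coneHomotopy]

section ConeHomotopy

variable {X : Finset G} {S : Set G} {k l m n : ℕ} {f : ∀ n, TupleChain G n →ₗ[ℤ] TupleChain G n}

-- By the cone formula, the identity holds as soon as the coned chain is a cycle.
theorem augBnd_coneHomotopy_of_cycle (hf : IsRipsChainMap X k l m f) (hn : n ≤ m)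
    (cycle : ∀ c ∈ chainsAt X k (n + 1),
      augBnd n (coneHomotopy f n (augBnd n c)) = f n (augBnd n c) - augBnd n c)
    {c : TupleChain G (n + 1)} (hc : c ∈ chainsAt X k (n + 1)) :
    augBnd (n + 1) (coneHomotopy f (n + 1) c) + coneHomotopy f n (augBnd n c) =
      f (n + 1) c - c := by
  refine map_eq_map_of_mem_supported (augBnd (n + 1) ∘ₗ coneHomotopy f (n + 1) +
    coneHomotopy f n ∘ₗ augBnd n) (f (n + 1) - LinearMap.id) (fun σ hσ => ?_) hc
  have hσ' : single σ 1 ∈ chainsAt X k (n + 1) := single_mem_supported ℤ _ hσ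
  have coned_cycle : augBnd n (f (n + 1) (single σ 1) - single σ 1 -
      coneHomotopy f n (augBnd n (single σ 1))) = 0 := by
    rw [map_sub, map_sub, hf.augBnd_map n hn _ hσ', cycle _ hσ', sub_self]
  simp only [LinearMap.add_apply, LinearMap.sub_apply, LinearMap.comp_apply, LinearMap.id_apply]
  rw [coneHomotopy_succ_single, augBnd_cone_succ, coned_cycle, map_zero, sub_zero, sub_add_cancel]

theorem augBnd_coneHomotopy (hf : IsRipsChainMap X k l m f) (hn : n ≤ m)
    {c : TupleChain G (n + 1)} (hc : c ∈ chainsAt X k (n + 1)) :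
    augBnd (n + 1) (coneHomotopy f (n + 1) c) + coneHomotopy f n (augBnd n c) =
      f (n + 1) c - c := by
  induction n with
  | zero =>
    refine augBnd_coneHomotopy_of_cycle hf hn (fun c _ => ?_) hc
    rw [hf.zero_eq_id, LinearMap.id_apply, sub_self, coneHomotopy, LinearMap.zero_apply, map_zero]
  | succ n ih =>
    refine augBnd_coneHomotopy_of_cycle hf hn (fun c hc => ?_) hc
    simpa only [augBnd_augBnd, map_zero, add_zero] using
      ih (n.le_succ.trans hn) (augBnd_mem_chainsAt hc)

theorem equivariantAt_coneHomotopy (hf : IsRipsChainMap X k l m f) (hn : n ≤ m + 1) :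
    EquivariantAt X k (coneHomotopy f n) := by
  induction n with
  | zero => exact fun g _ _ => (map_zero (leftTr g 1)).symm
  | succ n ih =>
    refine fun g c hc => map_eq_map_of_mem_supported (coneHomotopy f (n + 1) ∘ₗ leftTr g (n + 1))
      (leftTr g (n + 2) ∘ₗ coneHomotopy f (n + 1)) (fun σ hσ => ?_) hc
    have hσ' : single σ 1 ∈ chainsAt X k (n + 1) := single_mem_supported ℤ _ hσ
    simp only [LinearMap.comp_apply]
    rw [coneHomotopy_succ_single, ← cone_leftTr, map_sub (leftTr g (n + 1)),
      map_sub (leftTr g (n + 1)),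
      ← ih (n.le_succ.trans hn) g _ (augBnd_mem_chainsAt hσ'), ← hf.equivariantAt _ hn g _ hσ',
      ← augBnd_leftTr, leftTr_single, coneHomotopy_succ_single, Pi.smul_apply, smul_eq_mul]

theorem coneHomotopy_mem_chainsOn (hS : PreservesVertices X S k m f) (hn : n ≤ m + 1)
    {c : TupleChain G n} (hc : c ∈ ripsChains X S k n) :
    coneHomotopy f n c ∈ chainsOn S (n + 1) := by
  induction n with
  | zero => exact Submodule.zero_mem _
  | succ n ih =>
    rw [ripsChains, chainsOn, chainsAt, ← supported_inter] at hc
    refine map_mem_of_mem_supported _ (fun σ hσ => ?_) hc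
    have hσ' : single σ 1 ∈ ripsChains X S k (n + 1) :=
      ⟨single_mem_supported ℤ _ hσ.1, single_mem_supported ℤ _ hσ.2⟩
    rw [coneHomotopy_succ_single]
    exact cone_mem_chainsOn (hσ.1 0) (sub_mem (sub_mem (hS _ hn _ hσ') hσ'.1)
      (ih (n.le_succ.trans hn) ⟨augBnd_mem_chainsOn hσ'.1, augBnd_mem_chainsAt hσ'.2⟩))

theorem IsRipsChainMap.exists_map_sub_mem_boundaries (hX : Subgroup.closure (X : Set G) = ⊤)
    (hf : IsRipsChainMap X k l m f) (hn : n ≤ m) :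
    ∃ l', ∀ S, PreservesVertices X S k m f → ∀ z ∈ ripsChains X S k (n + 1), augBnd n z = 0 →
      f (n + 1) z - z ∈ boundaries X S l' (n + 1) := by
  have hn' : n + 1 ≤ m + 1 := Nat.succ_le_succ hn
  obtain ⟨l', hl'⟩ := (equivariantAt_coneHomotopy hf hn').exists_mem_chainsAt hX
  refine ⟨l', fun S hS z hz hz0 => ⟨coneHomotopy f (n + 1) z,
    ⟨coneHomotopy_mem_chainsOn hS hn' hz, hl' z hz.2⟩, ?_⟩⟩
  simpa only [hz0, map_zero, add_zero] using augBnd_coneHomotopy hf hn hz.2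

theorem IsRipsChainMap.exists_pow_sub_mem_boundaries (hX : Subgroup.closure (X : Set G) = ⊤)
    (hf : IsRipsChainMap X k k m f) (hn : n ≤ m) :
    ∃ l', ∀ S, PreservesVertices X S k m f → ∀ z ∈ ripsChains X S k (n + 1), augBnd n z = 0 →
      ∀ N : ℕ, (f (n + 1) ^ N) z - z ∈ boundaries X S l' (n + 1) := by
  obtain ⟨l', hl'⟩ := hf.exists_map_sub_mem_boundaries hX hn
  refine ⟨l', fun S hS z hz hz0 N => ?_⟩
  have telescope := Finset.sum_range_sub (fun i => (f (n + 1) ^ i) z) N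
  rw [pow_zero, Module.End.one_apply] at telescope
  rw [← telescope]
  refine Submodule.sum_mem _ fun i _ => ?_
  rw [pow_succ', Module.End.mul_apply]
  refine hl' S hS _ (hS.pow_apply_mem hf (Nat.succ_le_succ hn) hz i) ?_
  rw [(hf.pow i).augBnd_map n hn z hz.2, hz0, map_zero]

end ConeHomotopy

/-! ### Contraction to the scales of a connecting vector -/

/-- The equivariant chain map that sends each simplex to a filling, at the scale prescribed by `kv`,
of the image of its boundary. Fillings are chosen for simplices with initial vertex `1` and
translated; a choice is arbitrary where no filling exists. -/
noncomputable def contraction (X : Finset G) (kv : ℕ → ℕ) :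
    ∀ n, TupleChain G n →ₗ[ℤ] TupleChain G n
  | 0 => LinearMap.id
  | n + 1 => Finsupp.lift _ ℤ _ fun σ => leftTr (σ 0) (n + 1)
      (Function.invFunOn (augBnd n) (ripsChains X Set.univ (kv n) (n + 1))
        (contraction X kv n (augBnd n (single ((σ 0)⁻¹ • σ) 1))))

theorem contraction_succ_single (X : Finset G) (kv : ℕ → ℕ) (n : ℕ) (σ : Fin (n + 1) → G) :
    contraction X kv (n + 1) (single σ 1) = leftTr (σ 0) (n + 1)
      (Function.invFunOn (augBnd n) (ripsChains X Set.univ (kv n) (n + 1))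
        (contraction X kv n (augBnd n (single ((σ 0)⁻¹ • σ) 1)))) := by
  simp [contraction]

theorem contraction_leftTr (X : Finset G) (kv : ℕ → ℕ) (g : G) (n : ℕ) (c : TupleChain G n) :
    contraction X kv n (leftTr g n c) = leftTr g n (contraction X kv n c) := by
  refine map_eq_map_of_single (contraction X kv n ∘ₗ leftTr g n)
    (leftTr g n ∘ₗ contraction X kv n) (fun σ => ?_) c
  cases n with
  | zero => rfl
  | succ n =>
    simp only [LinearMap.comp_apply, leftTr_single, contraction_succ_single, leftTr_leftTr,
      Pi.smul_apply, smul_eq_mul, mul_inv_rev, mul_smul, inv_smul_smul]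

section Contraction

variable {X : Finset G} {kv : ℕ → ℕ} {k K m n : ℕ}

theorem contraction_succ_mem_chainsAt
    (h : ∀ c, contraction X kv n (augBnd n c) ∈ boundaries X Set.univ (kv n) n)
    (c : TupleChain G (n + 1)) : contraction X kv (n + 1) c ∈ chainsAt X (kv n) (n + 1) := by
  refine map_mem_of_mem_supported (s := Set.univ) _ (fun σ _ => ?_) (by simp)
  rw [contraction_succ_single]
  exact leftTr_mem_chainsAt _ (Function.invFunOn_mem (h _)).2

theorem augBnd_contraction_succ
    (h : ∀ c, contraction X kv n (augBnd n c) ∈ boundaries X Set.univ (kv n) n)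
    (c : TupleChain G (n + 1)) :
    augBnd n (contraction X kv (n + 1) c) = contraction X kv n (augBnd n c) := by
  refine map_eq_map_of_single (augBnd n ∘ₗ contraction X kv (n + 1))
    (contraction X kv n ∘ₗ augBnd n) (fun σ => ?_) c
  rw [LinearMap.comp_apply, contraction_succ_single, augBnd_leftTr, Function.invFunOn_eq (h _),
    ← contraction_leftTr, ← augBnd_leftTr, leftTr_single, smul_inv_smul, LinearMap.comp_apply]

theorem contraction_augBnd_mem_boundaries
    (hconn : ∀ q < m, BoundsAt X Set.univ q (kv q) (kv (q + 1))) (hn : n ≤ m)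
    (c : TupleChain G (n + 1)) :
    contraction X kv n (augBnd n c) ∈ boundaries X Set.univ (kv n) n := by
  induction n with
  | zero =>
    refine ⟨cone 1 0 (augBnd 0 c), ⟨mem_chainsOn_univ _, ?_⟩, augBnd_cone_zero _ _⟩
    refine map_mem_of_mem_supported (s := Set.univ) _ (fun σ _ => ?_) (by simp)
    rw [cone_single]
    refine single_mem_supported ℤ _ fun i j => ?_
    rw [Fin.eq_zero i, Fin.eq_zero j, wordDist_self]
    exact Nat.zero_le _
  | succ n ih =>
    have fillable := ih (n.le_succ.trans hn)
    refine boundsAt_iff_mem_boundaries.1 (hconn n hn) _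
      ⟨mem_chainsOn_univ _, contraction_succ_mem_chainsAt fillable _⟩ ?_
    rw [augBnd_contraction_succ fillable, augBnd_augBnd, map_zero]

theorem isRipsChainMap_contraction
    (hconn : ∀ q < m, BoundsAt X Set.univ q (kv q) (kv (q + 1))) (hK : ∀ q ≤ m, kv q ≤ K) :
    IsRipsChainMap X k K m (contraction X kv) where
  zero_eq_id := rfl
  map_mem
    | 0, _, c, _ => mem_chainsAt_zero _
    | n + 1, hn, c, _ => chainsAt_mono (hK n (by lia)) _
        (contraction_succ_mem_chainsAt (contraction_augBnd_mem_boundaries hconn (by lia)) c)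
  equivariantAt n _ g c _ := contraction_leftTr X kv g n c
  augBnd_map _ hn c _ := augBnd_contraction_succ (contraction_augBnd_mem_boundaries hconn hn) c

theorem contraction_mem_boundaries
    (hconn : ∀ q < m, BoundsAt X Set.univ q (kv q) (kv (q + 1))) (hn : n < m)
    {z : TupleChain G (n + 1)} (hz0 : augBnd n z = 0) :
    contraction X kv (n + 1) z ∈ boundaries X Set.univ (kv (n + 1)) (n + 1) := by
  have fillable := contraction_augBnd_mem_boundaries hconn hn.le
  refine boundsAt_iff_mem_boundaries.1 (hconn n hn) _
    ⟨mem_chainsOn_univ _, contraction_succ_mem_chainsAt fillable z⟩ ?_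
  rw [augBnd_contraction_succ fillable, hz0, map_zero]

end Contraction

/-! ### Raising the valuation -/

/-- `L` raises the valuation `v_χ` of chains at scale `k` by at least `δ`, that is, lowers it by at
most `-δ` when `δ` is negative. -/
def RaisesBy (X : Finset G) (k : ℕ) (χ : G → ℝ) (δ : ℝ) {n p : ℕ}
    (L : TupleChain G n →ₗ[ℤ] TupleChain G p) : Prop :=
  ∀ r, ∀ c ∈ ripsChains X {g | r ≤ χ g} k n, L c ∈ chainsOn {g | r + δ ≤ χ g} p

theorem IsCharacter.map_one {χ : G → ℝ} (hχ : IsCharacter χ) : χ 1 = 0 := by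
  simpa using hχ 1 1

section Raising

variable {X : Finset G} {χ : G → ℝ} {δ : ℝ} {k n p : ℕ}

theorem EquivariantAt.raisesBy (hχ : IsCharacter χ)
    {L : TupleChain G (n + 1) →ₗ[ℤ] TupleChain G p} (hL : EquivariantAt X k L)
    (h : ∀ σ ∈ baseTuples X k n, ∀ τ ∈ (L (single σ 1)).support, ∀ i, ∃ j, χ (σ j) + δ ≤ χ (τ i)) :
    RaisesBy X k χ δ L := by
  intro r c hc
  rw [ripsChains, chainsOn, chainsAt, ← supported_inter] at hc
  refine map_mem_of_mem_supported L (fun σ hσ' => ?_) hc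
  obtain ⟨hσr, hσ⟩ := hσ'
  rw [hL.map_single hσ]
  refine leftTr_mem_chainsOn (S := {a | r + δ ≤ χ (σ 0 * a)}) (fun _ ha => ha) fun τ hτ i => ?_
  obtain ⟨j, hj⟩ := h _ (inv_smul_mem_baseTuples hσ) τ hτ i
  have hσj : χ (σ j) = χ (σ 0) + χ (((σ 0)⁻¹ • σ) j) := by
    rw [← hχ, Pi.smul_apply, smul_eq_mul, mul_inv_cancel_left]
  have hrj : r ≤ χ (σ j) := hσr j
  rw [Set.mem_ofPred_eq, hχ]
  linarith

theorem EquivariantAt.exists_raisesBy (hX : Subgroup.closure (X : Set G) = ⊤)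
    (hχ : IsCharacter χ) {L : TupleChain G (n + 1) →ₗ[ℤ] TupleChain G p}
    (hL : EquivariantAt X k L) : ∃ δ, RaisesBy X k χ δ L := by
  obtain ⟨δ, hδ⟩ := ((Filter.eventually_all_finite (finite_baseTuples hX k n)).2 fun σ _ =>
    eventually_mem_chainsOn_superlevel χ (L (single σ 1))).exists
  refine ⟨δ, hL.raisesBy hχ fun σ hσ τ hτ i => ⟨0, ?_⟩⟩
  rw [hσ.1, hχ.map_one, zero_add]
  exact hδ σ hσ hτ i

theorem EquivariantAt.exists_pos_raisesBy (hX : Subgroup.closure (X : Set G) = ⊤)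
    (hχ : IsCharacter χ) {L : TupleChain G (n + 1) →ₗ[ℤ] TupleChain G p}
    (hL : EquivariantAt X k L)
    (h : ∀ σ ∈ baseTuples X k n, ∀ τ ∈ (L (single σ 1)).support, ∀ i, ∃ j, χ (σ j) < χ (τ i)) :
    ∃ δ > 0, RaisesBy X k χ δ L := by
  have small : ∀ᶠ δ : ℝ in nhdsWithin 0 (Set.Ioi 0), ∀ σ ∈ baseTuples X k n,
      ∀ τ ∈ (L (single σ 1)).support, ∀ i, ∃ j, χ (σ j) + δ ≤ χ (τ i) := by
    simp only [Filter.eventually_all_finite (finite_baseTuples hX k n),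
      Filter.eventually_all_finset, Filter.eventually_all]
    intro σ hσ τ hτ i
    obtain ⟨j, hj⟩ := h σ hσ τ hτ i
    filter_upwards [nhdsWithin_le_nhds (eventually_le_nhds (sub_pos.2 hj))] with δ hδ
    exact ⟨j, le_sub_iff_add_le'.1 hδ⟩
  obtain ⟨δ, hδ, hδ0⟩ := (small.and self_mem_nhdsWithin).exists
  exact ⟨δ, hδ0, hL.raisesBy hχ hδ⟩

theorem RaisesBy.pow_apply_mem {L : TupleChain G n →ₗ[ℤ] TupleChain G n}
    (hL : RaisesBy X k χ δ L) (hk : ∀ c ∈ chainsAt X k n, L c ∈ chainsAt X k n) {r : ℝ}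
    {c : TupleChain G n} (hc : c ∈ ripsChains X {g | r ≤ χ g} k n) (N : ℕ) :
    (L ^ N) c ∈ ripsChains X {g | r + N * δ ≤ χ g} k n := by
  induction N with
  | zero => simpa using hc
  | succ N ih =>
    rw [pow_succ', Module.End.mul_apply, Nat.cast_succ, add_one_mul, ← add_assoc]
    exact ⟨hL _ _ ih, hk _ ih.2⟩

theorem RaisesBy.eventually_pow_apply_mem {L : TupleChain G n →ₗ[ℤ] TupleChain G n}
    (hL : RaisesBy X k χ δ L) (hδ : 0 < δ) (hk : ∀ c ∈ chainsAt X k n, L c ∈ chainsAt X k n)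
    (r : ℝ) : ∀ᶠ N : ℕ in Filter.atTop, ∀ c ∈ ripsChains X {g | r ≤ χ g} k n,
      (L ^ N) c ∈ ripsChains X {g | 0 ≤ χ g} k n := by
  have high : ∀ᶠ N : ℕ in Filter.atTop, -r ≤ N * δ :=
    (tendsto_natCast_atTop_atTop.atTop_mul_const hδ).eventually_ge_atTop (-r)
  filter_upwards [high] with N hN c hc
  refine inf_le_inf_right _ (chainsOn_mono (fun g hg => ?_) n) (hL.pow_apply_mem hk hc N)
  exact (neg_le_iff_add_nonneg'.1 hN).trans hg

end Raising

/-! ### Pushing fillings into the half space of a character -/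

section HalfSpace

variable {X : Finset G} {χ : G → ℝ} {k K m n : ℕ}
  {f ψ : ∀ n, TupleChain G n →ₗ[ℤ] TupleChain G n}

theorem preservesVertices_halfSpace (hr : ∀ n ≤ m + 1, ∃ δ > 0, RaisesBy X k χ δ (f n)) :
    PreservesVertices X {g | 0 ≤ χ g} k m f := by
  intro n hn c hc
  obtain ⟨δ, hδ, hfδ⟩ := hr n hn
  refine chainsOn_mono (fun g hg => ?_) n (hfδ 0 c hc)
  rw [Set.mem_ofPred_eq, zero_add] at hg
  exact hδ.le.trans hg

theorem IsRipsChainMap.eventually_preservesVertices_halfSpace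
    (hX : Subgroup.closure (X : Set G) = ⊤) (hχ : IsCharacter χ) (hf : IsRipsChainMap X K K m f)
    (hr : ∀ n ≤ m + 1, ∃ δ > 0, RaisesBy X K χ δ (f n)) (hψ : IsRipsChainMap X k K m ψ) :
    ∀ᶠ N : ℕ in Filter.atTop,
      PreservesVertices X {g | 0 ≤ χ g} k m fun n => (f n ^ N) ∘ₗ ψ n := by
  refine (Filter.eventually_all_finite (Set.finite_Iic (m + 1))).2 fun n hn => ?_
  cases n with
  | zero => exact Filter.Eventually.of_forall fun N c _ => mem_chainsOn_zero _ _
  | succ n =>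
    obtain ⟨β, hβ⟩ := (hψ.equivariantAt _ hn).exists_raisesBy hX hχ
    obtain ⟨δ, hδ, hfδ⟩ := hr _ hn
    filter_upwards [hfδ.eventually_pow_apply_mem hδ (hf.map_mem _ hn) (0 + β)] with N hN c hc
    exact (hN _ ⟨hβ 0 c hc, hψ.map_mem _ hn c hc.2⟩).1

theorem IsRipsChainMap.map_mem_boundaries (hf : IsRipsChainMap X k k m f) (hn : n ≤ m)
    {z : TupleChain G n} (hz : z ∈ boundaries X Set.univ k n) :
    f n z ∈ boundaries X Set.univ k n := by
  obtain ⟨c, hc, rfl⟩ := hz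
  exact ⟨f (n + 1) c, ⟨mem_chainsOn_univ _, hf.map_mem _ (Nat.succ_le_succ hn) c hc.2⟩,
    hf.augBnd_map n hn c hc.2⟩

theorem IsRipsChainMap.exists_pow_mem_boundaries_halfSpace (hf : IsRipsChainMap X k k m f)
    (hr : ∀ n ≤ m + 1, ∃ δ > 0, RaisesBy X k χ δ (f n)) (hn : n ≤ m) {z : TupleChain G n}
    (hz : z ∈ boundaries X Set.univ k n) :
    ∃ N : ℕ, (f n ^ N) z ∈ boundaries X {g | 0 ≤ χ g} k n := by
  obtain ⟨c, hc, rfl⟩ := hz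
  have hn' : n + 1 ≤ m + 1 := Nat.succ_le_succ hn
  obtain ⟨δ, hδ, hfδ⟩ := hr _ hn'
  obtain ⟨r, hrc⟩ := (eventually_mem_chainsOn_superlevel χ c).exists
  obtain ⟨N, hN⟩ := (hfδ.eventually_pow_apply_mem hδ (hf.map_mem _ hn') r).exists
  exact ⟨N, (f (n + 1) ^ N) c, hN c ⟨hrc, hc.2⟩, (hf.pow N).augBnd_map n hn c hc.2⟩

theorem typeFP_halfSpace_of_raisesBy (hX : Subgroup.closure (X : Set G) = ⊤) {kv : ℕ → ℕ}
    (hconn : ∀ q < m, BoundsAt X Set.univ q (kv q) (kv (q + 1))) (hK : ∀ q ≤ m, kv q ≤ K)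
    (hχ : IsCharacter χ) (hf : IsRipsChainMap X K K m f)
    (hr : ∀ n ≤ m + 1, ∃ δ > 0, RaisesBy X K χ δ (f n)) : TypeFP X {g | 0 ≤ χ g} m := by
  intro q hq k
  have hψ : IsRipsChainMap X k K m (contraction X kv) := isRipsChainMap_contraction hconn hK
  obtain ⟨N, hN⟩ := (hf.eventually_preservesVertices_halfSpace hX hχ hr hψ).exists
  have hg := (hf.pow N).comp hψ
  obtain ⟨l₁, hl₁⟩ := hg.exists_map_sub_mem_boundaries hX hq.le
  obtain ⟨l₂, hl₂⟩ := hf.exists_pow_sub_mem_boundaries hX hq.le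
  refine ⟨max k (max K (max l₁ l₂)), le_max_left _ _,
    boundsAt_iff_mem_boundaries.2 fun z hz hz0 => ?_⟩
  set u := (f (q + 1) ^ N) (contraction X kv (q + 1) z)
  have u_mem : u ∈ ripsChains X {g | 0 ≤ χ g} K (q + 1) :=
    ⟨hN _ (by lia) z hz, hg.map_mem _ (by lia) z hz.2⟩
  have u_cycle : augBnd q u = 0 := by
    simpa only [LinearMap.comp_apply, hz0, map_zero] using hg.augBnd_map q hq.le z hz.2
  have u_boundary : u ∈ boundaries X Set.univ K (q + 1) :=
    (hf.pow N).map_mem_boundaries hq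
      (boundaries_mono (hK _ hq) _ (contraction_mem_boundaries hconn hq hz0))
  obtain ⟨M, hM⟩ := hf.exists_pow_mem_boundaries_halfSpace hr hq u_boundary
  have sub_z : u - z ∈ boundaries X {g | 0 ≤ χ g} l₁ (q + 1) := hl₁ _ hN z hz hz0
  have sub_u : (f (q + 1) ^ M) u - u ∈ boundaries X {g | 0 ≤ χ g} l₂ (q + 1) :=
    hl₂ _ (preservesVertices_halfSpace hr) u u_mem u_cycle M
  have decomposition : z = (f (q + 1) ^ M) u - ((f (q + 1) ^ M) u - u) - (u - z) := by abel
  rw [decomposition]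
  exact sub_mem (sub_mem (boundaries_mono (by simp) _ hM) (boundaries_mono (by simp) _ sub_u))
    (boundaries_mono (by simp) _ sub_z)

end HalfSpace

/-! ### The characters raised by a chain endomorphism -/

/-- The extension of a family of endomorphisms of chain groups by the identity of the augmentation
module. -/
noncomputable def augmented {V : Type*}
    (φ : ∀ q : ℕ, TupleChain V (q + 1) →ₗ[ℤ] TupleChain V (q + 1)) :
    ∀ n, TupleChain V n →ₗ[ℤ] TupleChain V n
  | 0 => LinearMap.id
  | q + 1 => φ q

theorem vchain_sub_vchain_single_pos_iff {V : Type*} (χ : V → ℝ) {q : ℕ}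
    (c : TupleChain V (q + 1)) (x : Fin (q + 1) → V) :
    0 < vchain χ c - vchain χ (single x 1) ↔
      ∀ τ ∈ c.support, ∀ i, ∃ j, χ (x j) < χ (τ i) := by
  have vsimp_lt_top : vsimp χ x < ⊤ := (iInf_le _ 0).trans_lt (EReal.coe_lt_top _)
  have vchain_single : vchain χ (single x 1) = vsimp χ x := by
    simp [vchain, support_single]
  have lt_vsimp_iff (τ : Fin (q + 1) → V) :
      vsimp χ x < vsimp χ τ ↔ ∀ i, vsimp χ x < χ (τ i) := by
    rw [vsimp.eq_1 χ τ, ← Finset.inf_univ_eq_iInf, Finset.lt_inf_iff vsimp_lt_top]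
    simp only [Finset.mem_univ, true_imp_iff]
  rw [EReal.sub_pos, vchain_single, vchain, ← Finset.inf_eq_iInf, Finset.lt_inf_iff vsimp_lt_top]
  simp only [lt_vsimp_iff]
  simp only [vsimp, iInf_lt_iff, EReal.coe_lt_coe_iff]

section UCond

variable {X : Finset G} {k m : ℕ} {φ : ∀ q : ℕ, TupleChain G (q + 1) →ₗ[ℤ] TupleChain G (q + 1)}
  {χ : G → ℝ}

theorem IsChainEndo.isRipsChainMap (hφ : IsChainEndo X k m φ) :
    IsRipsChainMap X k k m (augmented φ) := by
  simp only [IsChainEndo, vrChain_univ_iff_mem_chainsAt, bnd_eq_augBnd] at hφ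
  obtain ⟨mem, equivariant, aug_map, bnd_map⟩ := hφ
  refine ⟨rfl, ?_, ?_, ?_⟩
  · rintro (_ | q) hq c hc
    exacts [hc, mem q (Nat.le_of_succ_le_succ hq) c hc]
  · rintro (_ | q) hq g c hc
    exacts [rfl, equivariant q (Nat.le_of_succ_le_succ hq) g c hc]
  · rintro (_ | q) hq c hc
    · simp only [augmented, LinearMap.id_apply, augBnd_zero_apply, aug_map c hc]
    · exact bnd_map q hq c hc

theorem uCond_iff : UCond X k m φ χ ↔ ∀ q ≤ m, ∀ x ∈ baseTuples X k q,
    ∀ τ ∈ (φ q (single x 1)).support, ∀ i, ∃ j, χ (x j) < χ (τ i) := by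
  simp only [UCond, vchain_sub_vchain_single_pos_iff, vrChain_univ_iff_mem_chainsAt, chainsAt,
    single_one_mem_supported_iff, baseTuples, Set.mem_ofPred_eq, and_imp]

theorem UCond.exists_pos_raisesBy (hU : UCond X k m φ χ)
    (hX : Subgroup.closure (X : Set G) = ⊤) (hχ : IsCharacter χ) (hφ : IsChainEndo X k m φ) :
    ∀ n ≤ m + 1, ∃ δ > 0, RaisesBy X k χ δ (augmented φ n)
  | 0, _ => ⟨1, one_pos, fun _ _ _ => mem_chainsOn_zero _ _⟩
  | q + 1, hq => (hφ.isRipsChainMap.equivariantAt _ hq).exists_pos_raisesBy hX hχ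
      (uCond_iff.1 hU q (Nat.le_of_succ_le_succ hq))

theorem isOpen_setOf_uCond (hX : Subgroup.closure (X : Set G) = ⊤) (k m : ℕ)
    (φ : ∀ q : ℕ, TupleChain G (q + 1) →ₗ[ℤ] TupleChain G (q + 1)) :
    IsOpen {χ : G → ℝ | UCond X k m φ χ} := by
  simp only [uCond_iff, Set.ofPred_forall, Set.ofPred_exists]
  exact (Set.finite_Iic m).isOpen_biInter fun q _ =>
    (finite_baseTuples hX k q).isOpen_biInter fun x _ =>
      isOpen_biInter_finset fun τ _ => isOpen_iInter_of_finite fun i => isOpen_iUnion fun j =>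
        isOpen_lt (continuous_apply _) (continuous_apply _)

end UCond

theorem stmt13_general {X : Finset G} (hX : Subgroup.closure (X : Set G) = ⊤) {k m : ℕ}
    {kv : ℕ → ℕ} (hconn : ∀ q < m, BoundsAt X Set.univ q (kv q) (kv (q + 1)))
    (hk : ∀ q ≤ m, kv q ≤ k)
    {φ : ∀ q : ℕ, TupleChain G (q + 1) →ₗ[ℤ] TupleChain G (q + 1)}
    (hφ : IsChainEndo X k m φ) :
    IsOpen {χ : G → ℝ | UCond X k m φ χ} ∧
      ∀ χ : G → ℝ, IsCharacter χ → UCond X k m φ χ → TypeFP X {g : G | 0 ≤ χ g} m :=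
  ⟨isOpen_setOf_uCond hX k m φ, fun _ hχ hU => typeFP_halfSpace_of_raisesBy hX hconn hk hχ
    hφ.isRipsChainMap (hU.exists_pos_raisesBy hX hχ hφ)⟩

/-- For `G` with homological connecting vector of maximum `k` and a chain endomorphism `φ`
of `ℤG`-complexes on `(C_q^k(G))_{q≤m}` extending the identity on `ℤ`, the set `U(φ)` is an
open set of characters and `U(φ) ⊆ Σ^m(G;ℤ)`. -/
theorem stmt13 {G : Type*} [Group G] (X : Finset G)
    (hX : Subgroup.closure (X : Set G) = ⊤) (m : ℕ) (kv : ℕ → ℕ)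
    (hconn : ∀ q < m, BoundsAt X Set.univ q (kv q) (kv (q + 1)))
    (φ : ∀ q : ℕ, ((Fin (q + 1) → G) →₀ ℤ) →ₗ[ℤ] ((Fin (q + 1) → G) →₀ ℤ))
    (hφ : IsChainEndo X ((Finset.range (m + 1)).sup kv) m φ) :
    IsOpen {χ : {f : G → ℝ // IsCharacter f} |
      UCond X ((Finset.range (m + 1)).sup kv) m φ χ.1} ∧
    (∀ χ : G → ℝ, IsCharacter χ → UCond X ((Finset.range (m + 1)).sup kv) m φ χ →
      TypeFP X {g : G | 0 ≤ χ g} m) := by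
  obtain ⟨isOpen, typeFP⟩ := stmt13_general hX hconn
    (fun _ hq => Finset.le_sup (f := kv) (Finset.mem_range.2 (Nat.lt_succ_of_le hq))) hφ
  exact ⟨isOpen.preimage continuous_subtype_val, typeFP⟩
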